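/- Let n ≥ 2. For every element x̃ ∈ S̃_n, writing x = p(x̃) ∈ S_n, and for all 0 ≤ i ≠ j ≤ n−1, one has x̃ · τ̃_{i,j} · x̃^{−1} = z^{ε(x)} · τ̃_{x(i), x(j)}, where ε(x) ∈ {0,1} is determined by sign(x) = (−1)^{ε(x)}. -/

import Mathlib

open Equiv

/-- Generator `z` as an element of the free group. -/
def zF (n : ℕ) : FreeGroup (Fin (n-1) ⊕ Unit) := FreeGroup.of (Sum.inr ())

/-- Generator `τ̃ᵢ` as an element of the free group. -/
def tF (n : ℕ) (i : Fin (n-1)) : FreeGroup (Fin (n-1) ⊕ Unit) := FreeGroup.of (Sum.inl i)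

/-- Relations of the spin extension of the symmetric group. -/
def spinRels (n : ℕ) : Set (FreeGroup (Fin (n-1) ⊕ Unit)) :=
  {zF n * zF n} ∪
  {w | ∃ i : Fin (n-1), w = zF n * tF n i * (tF n i * zF n)⁻¹} ∪
  {w | ∃ i : Fin (n-1), w = tF n i * tF n i * (zF n)⁻¹} ∪
  {w | ∃ i j : Fin (n-1), 1 < |(i : ℤ) - (j : ℤ)| ∧ w = tF n i * tF n j * (zF n * tF n j * tF n i)⁻¹} ∪
  {w | ∃ i j : Fin (n-1), (j : ℕ) = (i : ℕ) + 1 ∧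
        w = tF n i * tF n j * tF n i * (tF n j * tF n i * tF n j)⁻¹}

/-- The spin extension `S̃ₙ` of the symmetric group, as a presented group. -/
abbrev SpinSym (n : ℕ) := PresentedGroup (spinRels n)

/-- The central element `z` of `S̃ₙ`. -/
def zt (n : ℕ) : SpinSym n := PresentedGroup.of (Sum.inr ())

/-- The generator `τ̃ᵢ` of `S̃ₙ`. -/
def tt (n : ℕ) (i : Fin (n-1)) : SpinSym n := PresentedGroup.of (Sum.inl i)

/-- `i` as an element of `Fin n`. -/
def finL (n : ℕ) (i : Fin (n-1)) : Fin n := ⟨i, by have := i.2; omega⟩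

/-- `i+1` as an element of `Fin n`. -/
def finR (n : ℕ) (i : Fin (n-1)) : Fin n := ⟨(i : ℕ) + 1, by have := i.2; omega⟩

/-- `τ̃ₖ` for a natural number index, `1` out of range. -/
def ttN (n : ℕ) (k : ℕ) : SpinSym n := if h : k < n - 1 then tt n ⟨k, h⟩ else 1

/-- For `i ≤ j`, the word `τ̃ᵢ·τ̃ᵢ₊₁⋯τ̃ⱼ₋₂·τ̃ⱼ₋₁·τ̃ⱼ₋₂⋯τ̃ᵢ₊₁·τ̃ᵢ` (equal to `1` when `i = j`). -/
def ttilCore (n i j : ℕ) : SpinSym n :=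
  (((List.range' i (j - i)) ++ (List.range' i (j - 1 - i)).reverse).map (ttN n)).prod

/-- The lifted transpositions `τ̃_{i,j}`, with `τ̃_{j,i} = z·τ̃_{i,j}` for `i < j`,
and `τ̃_{k,k} = 1`. -/
def ttil (n i j : ℕ) : SpinSym n := if j < i then zt n * ttilCore n j i else ttilCore n i j

theorem zt_mul_self (n : ℕ) : zt n * zt n = 1 :=
  PresentedGroup.one_of_mem (rels := spinRels n) (x := zF n * zF n)
    (Or.inl (Or.inl (Or.inl (Or.inl rfl))))

theorem zt_mul_tt (n : ℕ) (i : Fin (n-1)) : zt n * tt n i = tt n i * zt n :=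
  PresentedGroup.mk_eq_mk_of_mul_inv_mem (rels := spinRels n)
    (x := zF n * tF n i) (y := tF n i * zF n)
    (Or.inl (Or.inl (Or.inl (Or.inr ⟨i, rfl⟩))))

theorem tt_mul_self (n : ℕ) (i : Fin (n-1)) : tt n i * tt n i = zt n :=
  PresentedGroup.mk_eq_mk_of_mul_inv_mem (rels := spinRels n)
    (x := tF n i * tF n i) (y := zF n)
    (Or.inl (Or.inl (Or.inr ⟨i, rfl⟩)))

theorem tt_mul_tt_of_far (n : ℕ) (i j : Fin (n-1)) (h : 1 < |(i : ℤ) - (j : ℤ)|) :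
    tt n i * tt n j = zt n * tt n j * tt n i :=
  PresentedGroup.mk_eq_mk_of_mul_inv_mem (rels := spinRels n)
    (x := tF n i * tF n j) (y := zF n * tF n j * tF n i)
    (Or.inl (Or.inr ⟨i, j, h, rfl⟩))

theorem tt_braid (n : ℕ) (i j : Fin (n-1)) (h : (j : ℕ) = (i : ℕ) + 1) :
    tt n i * tt n j * tt n i = tt n j * tt n i * tt n j :=
  PresentedGroup.mk_eq_mk_of_mul_inv_mem (rels := spinRels n)
    (x := tF n i * tF n j * tF n i) (y := tF n j * tF n i * tF n j)
    (Or.inr ⟨i, j, h, rfl⟩)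

theorem zt_mul_cancel_left (n : ℕ) (y : SpinSym n) : zt n * (zt n * y) = y := by
  rw [← mul_assoc, zt_mul_self, one_mul]

theorem zt_comm (n : ℕ) (x : SpinSym n) : x * zt n = zt n * x := by
  have hx : x ∈ Subgroup.closure (Set.range (PresentedGroup.of (rels := spinRels n))) := by
    rw [PresentedGroup.closure_range_of]; trivial
  have hle : Subgroup.closure (Set.range (PresentedGroup.of (rels := spinRels n))) ≤
      Subgroup.centralizer {zt n} := by
    rw [Subgroup.closure_le]
    rintro _ ⟨i | i, rfl⟩
    · exact Subgroup.mem_centralizer_singleton_iff.2 (zt_mul_tt n i).symm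
    · exact Subgroup.mem_centralizer_singleton_iff.2 rfl
  exact Subgroup.mem_centralizer_singleton_iff.1 (hle hx)

theorem zt_left_comm (n : ℕ) (x y : SpinSym n) : x * (zt n * y) = zt n * (x * y) := by
  rw [← mul_assoc, zt_comm, mul_assoc]

theorem ttN_mul_self (n k : ℕ) (hk : k + 1 < n) : ttN n k * ttN n k = zt n := by
  have h : k < n - 1 := by omega
  simp only [ttN, h, dite_true]
  exact tt_mul_self n _

theorem ttN_mul_self_left (n k : ℕ) (hk : k + 1 < n) (y : SpinSym n) :
    ttN n k * (ttN n k * y) = zt n * y := by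
  rw [← mul_assoc, ttN_mul_self n k hk]

theorem ttN_mul_ttN_of_far (n k l : ℕ) (hk : k + 1 < n) (hl : l + 1 < n)
    (h : k + 1 < l ∨ l + 1 < k) : ttN n k * ttN n l = zt n * (ttN n l * ttN n k) := by
  have h1 : k < n - 1 := by omega
  have h2 : l < n - 1 := by omega
  simp only [ttN, h1, h2, dite_true]
  rw [tt_mul_tt_of_far, mul_assoc]
  rw [lt_abs]
  push_cast
  omega

theorem ttN_braid (n k : ℕ) (hk : k + 2 < n) :
    ttN n k * (ttN n (k+1) * ttN n k) = ttN n (k+1) * (ttN n k * ttN n (k+1)) := by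
  have h1 : k < n - 1 := by omega
  have h2 : k + 1 < n - 1 := by omega
  simp only [ttN, h1, h2, dite_true, ← mul_assoc]
  exact tt_braid n _ _ rfl

theorem ttN_braid_left (n k : ℕ) (hk : k + 2 < n) (y : SpinSym n) :
    ttN n k * (ttN n (k+1) * (ttN n k * y)) =
      ttN n (k+1) * (ttN n k * (ttN n (k+1) * y)) := by
  simpa only [mul_assoc] using congrArg (· * y) (ttN_braid n k hk)

theorem ttilCore_succ (n i : ℕ) : ttilCore n i (i+1) = ttN n i := by
  simp [ttilCore]

theorem ttilCore_rec (n i j : ℕ) (h : i + 1 < j) :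
    ttilCore n i j = ttN n i * (ttilCore n (i+1) j * ttN n i) := by
  obtain ⟨d, rfl⟩ := Nat.exists_eq_add_of_lt h
  have e1 : i + 1 + d + 1 - i = d + 2 := by omega
  have e2 : i + 1 + d + 1 - 1 - i = d + 1 := by omega
  have e3 : i + 1 + d + 1 - (i + 1) = d + 1 := by omega
  have e4 : i + 1 + d + 1 - 1 - (i + 1) = d := by omega
  simp only [ttilCore, e1, e2, e3, e4]
  rw [List.range'_succ (s := i) (n := d + 1), List.range'_succ (s := i) (n := d)]
  simp [mul_assoc]

theorem ttN_mul_ttilCore_of_far (n k : ℕ) (hk : k + 1 < n) (d i : ℕ) (hj : i + d + 1 < n)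
    (h : k + 1 < i ∨ i + d + 1 < k) :
    ttN n k * ttilCore n i (i + d + 1) = zt n * (ttilCore n i (i + d + 1) * ttN n k) := by
  induction d generalizing i with
  | zero =>
    rw [add_zero, ttilCore_succ]
    exact ttN_mul_ttN_of_far n k i hk (by omega) (by omega)
  | succ d ih =>
    have h1 := ih (i+1) (by omega) (by omega)
    rw [show i + 1 + d + 1 = i + (d + 1) + 1 by ring] at h1
    have hf := ttN_mul_ttN_of_far n k i hk (by omega) (by omega)
    rw [ttilCore_rec n i _ (by omega), ← mul_assoc, hf]
    simp only [mul_assoc]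
    rw [← mul_assoc (ttN n k), h1]
    simp only [mul_assoc, hf, zt_left_comm, zt_mul_cancel_left]

theorem ttN_mul_ttilCore_of_between (n k : ℕ) (d i : ℕ) (hj : i + d + 1 < n)
    (hi : i < k) (h : k + 1 < i + d + 1) :
    ttN n k * ttilCore n i (i + d + 1) = zt n * (ttilCore n i (i + d + 1) * ttN n k) := by
  induction d generalizing i with
  | zero => omega
  | succ d ih =>
    obtain rfl | hik : k = i + 1 ∨ i + 1 < k := by omega
    · obtain ⟨e, rfl⟩ : ∃ e, d = e + 1 := ⟨d - 1, by omega⟩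
      have hf := ttN_mul_ttilCore_of_far n i (by omega) e (i+2) (by omega) (by omega)
      rw [show i + 2 + e + 1 = i + (e + 1 + 1) + 1 by ring] at hf
      rw [ttilCore_rec n i _ (by omega), ttilCore_rec n (i+1) _ (by omega)]
      simp only [mul_assoc]
      rw [← ttN_braid_left n i (by omega), ← mul_assoc (ttN n i) (ttilCore _ _ _), hf,
        ← ttN_braid n i (by omega)]
      simp only [mul_assoc, zt_left_comm]
    · have h1 := ih (i+1) (by omega) (by omega) (by omega)
      rw [show i + 1 + d + 1 = i + (d + 1) + 1 by ring] at h1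
      have hf := ttN_mul_ttN_of_far n k i (by omega) (by omega) (by omega)
      rw [ttilCore_rec n i _ (by omega), ← mul_assoc, hf]
      simp only [mul_assoc]
      rw [← mul_assoc (ttN n k), h1]
      simp only [mul_assoc, hf, zt_left_comm, zt_mul_cancel_left]

theorem ttN_mul_ttilCore_right (n : ℕ) (d i : ℕ) (hj : i + d + 2 < n) :
    ttN n (i + d + 1) * ttilCore n i (i + d + 1) =
      zt n * (ttilCore n i (i + d + 2) * ttN n (i + d + 1)) := by
  induction d generalizing i with
  | zero =>
    rw [add_zero, ttilCore_succ, ttilCore_rec n i _ (by omega), ttilCore_succ]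
    simp only [mul_assoc]
    rw [ttN_braid_left n i (by omega), ttN_mul_self n _ (by omega)]
    simp only [zt_comm, zt_left_comm, zt_mul_cancel_left]
  | succ d ih =>
    have h1 := ih (i+1) (by omega)
    rw [show i + 1 + d + 1 = i + (d + 1) + 1 by ring,
      show i + 1 + d + 2 = i + (d + 1) + 2 by ring] at h1
    have hf := ttN_mul_ttN_of_far n (i + (d + 1) + 1) i (by omega) (by omega) (by omega)
    rw [ttilCore_rec n i _ (by omega), ttilCore_rec n i (i + (d + 1) + 2) (by omega),
      ← mul_assoc, hf]
    simp only [mul_assoc]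
    rw [← mul_assoc (ttN n (i + (d + 1) + 1)), h1]
    simp only [mul_assoc, hf, zt_left_comm, zt_mul_cancel_left]

/-- The adjacent transposition `(k, k+1)` acting on natural numbers. -/
def adjSwap (k i : ℕ) : ℕ := if i = k then k + 1 else if i = k + 1 then k else i

theorem ttil_symm (n i j : ℕ) (h : i ≠ j) : ttil n i j = zt n * ttil n j i := by
  rcases lt_or_gt_of_ne h with h | h
  · simp [ttil, h, h.not_gt, zt_mul_cancel_left]
  · simp [ttil, h, h.not_gt]

theorem ttil_of_lt (n i j : ℕ) (h : i < j) : ttil n i j = ttilCore n i j := by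
  simp [ttil, h.not_gt]

theorem ttN_mul_ttil_of_lt (n k i j : ℕ) (hk : k + 1 < n) (hj : j < n) (hij : i < j) :
    ttN n k * ttil n i j = zt n * (ttil n (adjSwap k i) (adjSwap k j) * ttN n k) := by
  rw [ttil_of_lt n i j hij]
  have fixed (h1 : i ≠ k) (h2 : i ≠ k + 1) (h3 : j ≠ k) (h4 : j ≠ k + 1) :
      ttil n (adjSwap k i) (adjSwap k j) = ttilCore n i j := by
    simp [adjSwap, h1, h2, h3, h4, ttil_of_lt n i j hij]
  obtain ⟨d, rfl⟩ := Nat.exists_eq_add_of_lt hij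
  by_cases hfar : k + 1 < i ∨ i + d + 1 < k
  · rw [fixed (by omega) (by omega) (by omega) (by omega)]
    exact ttN_mul_ttilCore_of_far n k hk d i hj hfar
  by_cases hbet : i < k ∧ k + 1 < i + d + 1
  · rw [fixed (by omega) (by omega) (by omega) (by omega)]
    exact ttN_mul_ttilCore_of_between n k d i hj hbet.1 hbet.2
  obtain rfl | rfl | rfl | ⟨rfl, hd⟩ :
      i = k + 1 ∨ i = k ∨ k = i + d + 1 ∨ (k = i + d ∧ 0 < d) := by omega
  · have e1 : adjSwap k (k + 1) = k := by simp [adjSwap]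
    have e2 : adjSwap k (k + 1 + d + 1) = k + 1 + d + 1 := by
      unfold adjSwap; split_ifs <;> omega
    rw [e1, e2, ttil_of_lt n _ _ (by omega), ttilCore_rec n k _ (by omega)]
    simp only [mul_assoc, ttN_mul_self n k hk, zt_comm, zt_left_comm, zt_mul_cancel_left]
  · have e1 : adjSwap i i = i + 1 := by simp [adjSwap]
    rcases Nat.eq_zero_or_pos d with rfl | hd
    · have e2 : adjSwap i (i + 0 + 1) = i := by simp [adjSwap]
      rw [e1, e2, ttil_symm n _ _ (by omega), ttil_of_lt n _ _ (by omega), add_zero,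
        ttilCore_succ]
      simp only [mul_assoc, zt_mul_cancel_left]
    · have e2 : adjSwap i (i + d + 1) = i + d + 1 := by
        unfold adjSwap; split_ifs <;> omega
      rw [e1, e2, ttil_of_lt n _ _ (by omega), ttilCore_rec n i _ (by omega),
        ttN_mul_self_left n i hk]
  · have e1 : adjSwap (i + d + 1) i = i := by
      unfold adjSwap; split_ifs <;> omega
    have e2 : adjSwap (i + d + 1) (i + d + 1) = i + d + 2 := by simp [adjSwap]
    rw [e1, e2, ttil_of_lt n _ _ (by omega)]
    exact ttN_mul_ttilCore_right n d i hk
  · obtain ⟨e, rfl⟩ : ∃ e, d = e + 1 := ⟨d - 1, by omega⟩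
    have e1 : adjSwap (i + (e + 1)) i = i := by
      unfold adjSwap; split_ifs <;> omega
    have e2 : adjSwap (i + (e + 1)) (i + (e + 1) + 1) = i + (e + 1) := by simp [adjSwap]
    rw [e1, e2, ttil_of_lt n _ _ (by omega)]
    have h := ttN_mul_ttilCore_right n e i hk
    apply mul_right_cancel (b := ttN n (i + (e + 1)))
    have h' := congrArg (ttN n (i + (e + 1)) * ·) h
    simp only [← add_assoc, mul_assoc, zt_left_comm, zt_comm, zt_mul_cancel_left,
      ttN_mul_self n (i + e + 1) hk, ttN_mul_self_left n (i + e + 1) hk] at h' ⊢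
    have h'' := congrArg (zt n * ·) h'
    simp only [zt_mul_cancel_left] at h''
    exact h''.symm

theorem adjSwap_injective (k : ℕ) : Function.Injective (adjSwap k) := by
  intro a b h
  unfold adjSwap at h
  split_ifs at h <;> omega

theorem ttN_mul_ttil (n k i j : ℕ) (hk : k + 1 < n) (hi : i < n) (hj : j < n) (hij : i ≠ j) :
    ttN n k * ttil n i j = zt n * (ttil n (adjSwap k i) (adjSwap k j) * ttN n k) := by
  rcases lt_or_gt_of_ne hij with h | h
  · exact ttN_mul_ttil_of_lt n k i j hk hj h
  · rw [ttil_symm n i j hij, ttil_symm n (adjSwap k i) _ ((adjSwap_injective k).ne hij),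
      zt_left_comm, ttN_mul_ttil_of_lt n k j i hk hi h]
    simp only [mul_assoc]

theorem val_swap_finL_finR (n : ℕ) (k : Fin (n-1)) (i : Fin n) :
    (Equiv.swap (finL n k) (finR n k) i).val = adjSwap k i.val := by
  rw [Equiv.swap_apply_def]
  simp only [Fin.ext_iff, finL, finR, adjSwap]
  split_ifs <;> rfl

theorem tt_conj_ttil (n : ℕ) (k : Fin (n-1)) (i j : Fin n) (hij : i ≠ j) :
    tt n k * ttil n i.val j.val * (tt n k)⁻¹ =
      zt n * ttil n (Equiv.swap (finL n k) (finR n k) i).val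
        (Equiv.swap (finL n k) (finR n k) j).val := by
  have h := ttN_mul_ttil n k i.val j.val (by omega) i.2 j.2 (Fin.val_ne_of_ne hij)
  have hk : ttN n k = tt n k := by simp [ttN]
  rw [val_swap_finL_finR, val_swap_finL_finR, mul_inv_eq_iff_eq_mul, mul_assoc, ← hk]
  exact h

theorem conjugation_formula (n : ℕ) (hn : 2 ≤ n)
    (p : SpinSym n →* Equiv.Perm (Fin n))
    (hpt : ∀ i : Fin (n-1), p (tt n i) = Equiv.swap (finL n i) (finR n i))
    (hpz : p (zt n) = 1)
    (x : SpinSym n) (i j : Fin n) (hij : i ≠ j) :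
    x * ttil n i.val j.val * x⁻¹ =
      zt n ^ (if Equiv.Perm.sign (p x) = 1 then 0 else 1) *
        ttil n ((p x) i).val ((p x) j).val := by
  have hx : x ∈ Subgroup.closure (Set.range (PresentedGroup.of (rels := spinRels n))) := by
    rw [PresentedGroup.closure_range_of]; trivial
  induction hx using Subgroup.closure_induction generalizing i j with
  | mem x hx =>
    obtain ⟨k | ⟨⟩, rfl⟩ := hx
    · change tt n k * _ * (tt n k)⁻¹ = zt n ^ (if Equiv.Perm.sign (p (tt n k)) = 1 then 0 else 1) *
        ttil n ((p (tt n k)) i).val ((p (tt n k)) j).val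
      have hne : finL n k ≠ finR n k := by simp [finL, finR]
      rw [hpt, Equiv.Perm.sign_swap hne, if_neg (by decide), pow_one]
      exact tt_conj_ttil n k i j hij
    · change zt n * _ * (zt n)⁻¹ = zt n ^ (if Equiv.Perm.sign (p (zt n)) = 1 then 0 else 1) *
        ttil n ((p (zt n)) i).val ((p (zt n)) j).val
      rw [hpz, ← zt_comm]
      simp
  | one => simp
  | mul x y _ _ ihx ihy =>
    have hy := ihy i j hij
    have hx := ihx (p y i) (p y j) ((p y).injective.ne hij)
    have hxy : x * y * ttil n i.val j.val * (x * y)⁻¹ =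
        x * (y * ttil n i.val j.val * y⁻¹) * x⁻¹ := by group
    rw [hxy, hy]
    simp only [map_mul, Equiv.Perm.coe_mul, Function.comp_apply]
    rcases Int.units_eq_one_or (Equiv.Perm.sign (p x)) with h1 | h1 <;>
    rcases Int.units_eq_one_or (Equiv.Perm.sign (p y)) with h2 | h2 <;>
    simp [h1, h2, mul_assoc, zt_left_comm] at hx ⊢ <;>
    simp [hx, zt_mul_cancel_left]
  | inv x _ ih =>
    have h := ih ((p x)⁻¹ i) ((p x)⁻¹ j) ((p x)⁻¹.injective.ne hij)
    have apply_inv_apply (a : Fin n) : p x ((p x)⁻¹ a) = a := (p x).apply_symm_apply a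
    rw [apply_inv_apply, apply_inv_apply, mul_inv_eq_iff_eq_mul] at h
    rw [inv_inv, map_inv, Equiv.Perm.sign_inv, mul_assoc, inv_mul_eq_iff_eq_mul]
    rcases Int.units_eq_one_or (Equiv.Perm.sign (p x)) with h1 | h1
    · simpa [h1] using h.symm
    · simp [h1, zt_left_comm, mul_assoc] at h ⊢
      rw [h, zt_mul_cancel_left]
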